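/- Let N = (P,T,F,Var) be a loop-less UDPN, i, f ℚ⁺-markings, H a histogram (over Var × D), and t ∈ T such that f = i + Δ(t)·H. Then there exists a ℚ⁺-run ρ such that i →ρ_{ℚ⁺} f. -/

import Mathlib

open Finset

noncomputable section
open scoped Classical

/-- An unordered data Petri net over places `P`, transitions `T`, variables `V`,
with countably infinite data domain `D = ℕ`.
`pre p t` is the function `F(p,t) : V → ℕ` and `post t p` is `F(t,p) : V → ℕ`. -/
structure UDPN (P T V : Type) where
  pre : P → T → V → ℕ
  post : T → P → V → ℕ

/-- An X-step `(c, t, π)`: coefficient, transition and mode. -/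
structure Step (T V : Type) where
  c : ℚ
  t : T
  π : V → ℕ

variable {P T V : Type} [Fintype P] [Fintype T] [Fintype V]

/-- The `P × V` rational matrix `F(•,t)`. -/
def preMat (N : UDPN P T V) (t : T) (p : P) (x : V) : ℚ := (N.pre p t x : ℚ)

/-- The displacement `Δ(t) = F(t,•) − F(•,t)` as a `P × V` rational matrix. -/
def delta (N : UDPN P T V) (t : T) (p : P) (x : V) : ℚ :=
  (N.post t p x : ℚ) - (N.pre p t x : ℚ)

/-- `A ∘ π⁻¹`: the `P × ℕ` matrix with `(A∘π⁻¹)(p,α) = A(p,x)` if `α = π x`,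
and `0` if `α` is outside the range of `π`. (For injective `π` the sum has at
most one nonzero summand.) -/
def compInv (A : P → V → ℚ) (π : V → ℕ) (p : P) (α : ℕ) : ℚ :=
  ∑ x : V, if π x = α then A p x else 0

/-- Only finitely many nonzero columns. -/
def FinCols (m : P → ℕ → ℚ) : Prop := {α : ℕ | ∃ p, m p α ≠ 0}.Finite

/-- `IsMarking pos m`: `m` is an X-marking; `pos = true` corresponds to `X = ℚ⁺`
(all entries nonnegative), `pos = false` to `X = ℚ`. -/
def IsMarking (pos : Bool) (m : P → ℕ → ℚ) : Prop :=
  FinCols m ∧ (pos = true → ∀ p α, 0 ≤ m p α)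

/-- Data values of a marking. -/
def dvalM (m : P → ℕ → ℚ) : Set ℕ := {α | ∃ p, m p α ≠ 0}

/-- A valid X-step: nonnegative coefficient and injective mode.  -/
def IsStep (s : Step T V) : Prop := 0 ≤ s.c ∧ Function.Injective s.π

/-- A valid X-run: a finite sequence of X-steps. -/
def IsRun (ρ : List (Step T V)) : Prop := ∀ s ∈ ρ, IsStep s

/-- The effect `c · (Δ(t) ∘ π⁻¹)` of a step. -/
def stepEffect (N : UDPN P T V) (s : Step T V) (p : P) (α : ℕ) : ℚ :=
  s.c * compInv (delta N s.t) s.π p α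

/-- The effect `Δ(ρ)` of a run. -/
def runEffect (N : UDPN P T V) (ρ : List (Step T V)) (p : P) (α : ℕ) : ℚ :=
  (ρ.map fun s => stepEffect N s p α).sum

/-- A step `(c,t,π)` is fireable at `m` if `m − c·(F(•,t)∘π⁻¹)` is again an
X-marking: finitely many nonzero columns and (when `pos`) nonnegative entries. -/
def stepFireable (pos : Bool) (N : UDPN P T V) (m : P → ℕ → ℚ) (s : Step T V) : Prop :=
  FinCols (fun p α => m p α - s.c * compInv (preMat N s.t) s.π p α) ∧
  (pos = true → ∀ p α, 0 ≤ m p α - s.c * compInv (preMat N s.t) s.π p α)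

/-- A run is fireable at `m` if each step is fireable at the corresponding
intermediate marking. -/
def runFireable (pos : Bool) (N : UDPN P T V) : (P → ℕ → ℚ) → List (Step T V) → Prop
  | _, [] => True
  | m, s :: ρ => stepFireable pos N m s ∧
      runFireable pos N (fun p α => m p α + stepEffect N s p α) ρ

/-- `m →ρ_X m'` : `ρ` is fireable at `m` and `m' = m + Δ(ρ)`. -/
def Reaches (pos : Bool) (N : UDPN P T V) (i : P → ℕ → ℚ) (ρ : List (Step T V))
    (f : P → ℕ → ℚ) : Prop :=
  runFireable pos N i ρ ∧ f = fun p α => i p α + runEffect N ρ p α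

/-- `f` is X-reachable from `i`. -/
def Reach (pos : Bool) (N : UDPN P T V) (i f : P → ℕ → ℚ) : Prop :=
  ∃ ρ, IsRun ρ ∧ Reaches pos N i ρ f

/-- `vars(t)`. -/
def varsOf (N : UDPN P T V) (t : T) : Set V :=
  {x | ∃ p, N.pre p t x ≠ 0 ∨ N.post t p x ≠ 0}

/-- `maxvars(N) = max_{t ∈ T} |vars(t)|` (0 if `T` is empty). -/
def maxvars (N : UDPN P T V) : ℕ :=
  Finset.univ.sup fun t : T => (varsOf N t).ncard

/-- `dval(ρ)`: the data values used by a run. -/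
def runDval (N : UDPN P T V) (ρ : List (Step T V)) : Set ℕ :=
  {α | ∃ s ∈ ρ, ∃ x ∈ varsOf N s.t, s.π x = α}
/-- For `α ∈ E`: the least element of `{β ∈ E | β > α}` if nonempty, else `min E`. -/
def nextE (E : Finset ℕ) (α : ℕ) : ℕ :=
  if h : (E.filter fun β => α < β).Nonempty then (E.filter fun β => α < β).min' h
  else if h' : E.Nonempty then E.min' h' else 0

/-- The inverse of `nextE` on `E`: the greatest element of `{γ ∈ E | γ < β}` if
nonempty, else `max E`. -/
def prevE (E : Finset ℕ) (β : ℕ) : ℕ :=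
  if h : (E.filter fun γ => γ < β).Nonempty then (E.filter fun γ => γ < β).max' h
  else if h' : E.Nonempty then E.max' h' else 0

/-- The mode `π'` of `rot(E,ω)`, characterized by: the permutation matrix `P'` of
`π'` satisfies `P'(•,α) = P(•,α)` for `α ∉ E` and `P'(•,α) = P(•, nextE α)` for
`α ∈ E` (i.e. `π' x = α ↔ π x = nextE α` for `α ∈ E`). -/
def rotMode {V : Type} (E : Finset ℕ) (π : V → ℕ) (x : V) : ℕ :=
  if π x ∈ E then prevE E (π x) else π x

/-- `rot(E,ω)`. -/
def rotStep (E : Finset ℕ) (s : Step T V) : Step T V := ⟨s.c, s.t, rotMode E s.π⟩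

/-- The uniformization `U(E,ω)`: the concatenation
`rot^0(E, ω/|E|) ⋯ rot^{|E|−1}(E, ω/|E|)`. -/
def uniformize (E : Finset ℕ) (s : Step T V) : List (Step T V) :=
  (List.range E.card).map fun k => (rotStep E)^[k] ⟨s.c / (E.card : ℚ), s.t, s.π⟩

/-- Column `α` of `Δ(t)·P_π` is zero. -/
def zeroCol (N : UDPN P T V) (s : Step T V) (α : ℕ) : Prop :=
  ∀ p, compInv (delta N s.t) s.π p α = 0

/-- The transposition of the data values `α` and `β`. -/
def swapVal (α β γ : ℕ) : ℕ := if γ = α then β else if γ = β then α else γ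

/-- `R(α,E,ω)`: if column `α` of `Δ(t)·P_π` is zero then `ω` itself; otherwise the
step whose permutation matrix is obtained from `P_π` by exchanging columns `α` and
`β`, where `β` is the least datum in `E` whose column of `Δ(t)·P_π` is zero. -/
def replaceStep (N : UDPN P T V) (α : ℕ) (E : Finset ℕ) (s : Step T V) : Step T V :=
  if zeroCol N s α then s
  else if h : (E.filter fun β => zeroCol N s β).Nonempty then
    ⟨s.c, s.t, fun x => swapVal α ((E.filter fun β => zeroCol N s β).min' h) (s.π x)⟩
  else s

/-- `dec(E,α,σ)`: the concatenation `U(E,R(α,E,σ(1))) ⋯ U(E,R(α,E,σ(n)))`. -/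
def decRun (N : UDPN P T V) (α : ℕ) (E : Finset ℕ) (σ : List (Step T V)) :
    List (Step T V) :=
  σ.flatMap fun s => uniformize E (replaceStep N α E s)

/-- A histogram of order `q`: a `V × ℕ` matrix with nonnegative rational entries
and finitely many nonzero columns, every row summing to `q` and every column
summing to at most `q`. -/
def IsHistogram (H : V → ℕ → ℚ) (q : ℚ) : Prop :=
  0 ≤ q ∧ (∀ x α, 0 ≤ H x α) ∧ ({α | ∃ x, H x α ≠ 0}).Finite ∧
  (∀ x, ∑ᶠ α, H x α = q) ∧ (∀ α, ∑ x : V, H x α ≤ q)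

/-- `col(H)`: the nonzero columns of `H`. -/
def colH (H : V → ℕ → ℚ) : Set ℕ := {α | ∃ x, H x α ≠ 0}

/-- The permutation matrix `P_π` of a mode `π`. -/
def permMat {V : Type} (π : V → ℕ) (x : V) (α : ℕ) : ℚ := if π x = α then 1 else 0

/-- `Pre(ρ)`: pairs `(p,α)` of tokens consumed by the run `ρ`. -/
def preSet (N : UDPN P T V) (ρ : List (Step T V)) : Set (P × ℕ) :=
  {pa | ∃ s ∈ ρ, ∃ x, 0 < N.pre pa.1 s.t x ∧ s.π x = pa.2}

/-- `Post(ρ)`: pairs `(p,α)` of tokens produced by the run `ρ`. -/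
def postSet (N : UDPN P T V) (ρ : List (Step T V)) : Set (P × ℕ) :=
  {pa | ∃ s ∈ ρ, ∃ x, 0 < N.post s.t pa.1 x ∧ s.π x = pa.2}

/-- A loop-less UDPN: `PrePlace(t) ∩ PostPlace(t) = ∅` for every transition. -/
def IsLoopless (N : UDPN P T V) : Prop :=
  ∀ t : T, ¬ ∃ p : P, (∃ x, 0 < N.pre p t x) ∧ (∃ x, 0 < N.post t p x)

/-! Bordering the histogram `H` to a square matrix all of whose row and column sums agree makes
Birkhoff's theorem applicable: `H` is a conical combination of permutation matrices of modes, so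
`Δ(t)·H` is the effect of a run firing `t` in these modes. As `t` is loop-less, this run either only
consumes from or only produces to a given place, so the content of each place varies monotonically
between `i` and `f` and never becomes negative. -/

section Birkhoff

open Matrix

variable {R m n : Type*}

theorem exists_eq_sum_perm_of_sum_eq [Fintype n] [DecidableEq n] [Field R] [LinearOrder R]
    [IsStrictOrderedRing R] {q : R} {M : Matrix n n R} (hq : 0 ≤ q) (hM : ∀ i j, 0 ≤ M i j)
    (hrow : ∀ i, ∑ j, M i j = q) (hcol : ∀ j, ∑ i, M i j = q) :
    ∃ w : Equiv.Perm n → R, (∀ σ, 0 ≤ w σ) ∧ ∀ i j, M i j = ∑ σ with σ i = j, w σ := by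
  obtain ⟨M', hM', rfl⟩ := (exists_mem_doublyStochastic_eq_smul_iff hq).mpr ⟨hM, hrow, hcol⟩
  obtain ⟨w, hw, -, rfl⟩ := exists_eq_sum_perm_of_mem_doublyStochastic hM'
  refine ⟨fun σ => q * w σ, fun σ => mul_nonneg hq (hw σ), fun i j => ?_⟩
  simp [Matrix.sum_apply, Finset.mul_sum, Finset.sum_filter, PEquiv.toMatrix_apply,
    Equiv.toPEquiv_apply]

/-- The symmetric matrix obtained by bordering `H` with its transpose and with the defects of its
column sums from `q`. If the row sums of `H` are `q`, then so are all row and column sums of the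
bordered matrix. -/
def borderedMatrix [Fintype m] [DecidableEq n] [AddCommGroup R] (q : R)
    (H : Matrix m n R) : Matrix (m ⊕ n) (m ⊕ n) R :=
  fromBlocks 0 H Hᵀ (diagonal fun j => q - ∑ i, H i j)

theorem borderedMatrix_isSymm [Fintype m] [DecidableEq n] [AddCommGroup R] (q : R)
    (H : Matrix m n R) : (borderedMatrix q H).IsSymm := by
  simp [borderedMatrix, Matrix.IsSymm, fromBlocks_transpose]

theorem borderedMatrix_nonneg [Fintype m] [DecidableEq n] [AddCommGroup R] [PartialOrder R]
    [IsOrderedAddMonoid R] {q : R} {H : Matrix m n R} (hH : ∀ i j, 0 ≤ H i j)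
    (hcol : ∀ j, ∑ i, H i j ≤ q) (a b : m ⊕ n) : 0 ≤ borderedMatrix q H a b := by
  rcases a with i | j <;> rcases b with i' | j'
  · simp [borderedMatrix]
  · simp [borderedMatrix, hH]
  · simp [borderedMatrix, hH]
  · by_cases h : j = j' <;> simp [borderedMatrix, h, hcol]

theorem sum_borderedMatrix_row [Fintype m] [Fintype n] [DecidableEq n] [AddCommGroup R] {q : R}
    {H : Matrix m n R} (hrow : ∀ i, ∑ j, H i j = q) (a : m ⊕ n) :
    ∑ b, borderedMatrix q H a b = q := by
  rcases a with i | j <;> simp [borderedMatrix, diagonal_apply, hrow]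

theorem existsUnique_embedding_of_inr {α β γ : Type*} {f : α → β ⊕ γ}
    (hf : Function.Injective f) (h : ∀ a, ∃ c, f a = .inr c) :
    ∃! e : α ↪ γ, ∀ a, f a = .inr (e a) := by
  choose g hg using h
  have hinj : Function.Injective g := fun a a' haa' => hf (by rw [hg, hg, haa'])
  exact ⟨⟨g, hinj⟩, hg, fun e he =>
    Function.Embedding.ext fun a => Sum.inr_injective ((he a).symm.trans (hg a))⟩

theorem exists_eq_sum_embedding_of_sum_eq [Fintype m] [Fintype n] [DecidableEq n] [Field R]
    [LinearOrder R] [IsStrictOrderedRing R] {q : R} {H : Matrix m n R} (hq : 0 ≤ q)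
    (hH : ∀ i j, 0 ≤ H i j) (hrow : ∀ i, ∑ j, H i j = q) (hcol : ∀ j, ∑ i, H i j ≤ q) :
    ∃ w : (m ↪ n) → R, (∀ e, 0 ≤ w e) ∧ ∀ i j, H i j = ∑ e with e i = j, w e := by
  obtain ⟨v, hv, hsum⟩ := exists_eq_sum_perm_of_sum_eq hq (borderedMatrix_nonneg hH hcol)
    (sum_borderedMatrix_row hrow) fun b => by
      simpa only [(borderedMatrix_isSymm q H).apply] using sum_borderedMatrix_row hrow b
  -- The upper left block of the bordered matrix vanishes.
  have inl_to_inr (σ) (hσ : v σ ≠ 0) (i : m) : ∃ j, σ (.inl i) = .inr j := by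
    rcases h : σ (.inl i) with i' | j
    · have hzero : ∑ τ with τ (.inl i) = .inl i', v τ = 0 := by
        rw [← hsum]
        simp [borderedMatrix]
      exact absurd ((Finset.sum_eq_zero_iff_of_nonneg fun τ _ => hv τ).mp hzero σ (by simpa)) hσ
    · exact ⟨j, rfl⟩
  have existsUnique_embedding (σ) (hσ : v σ ≠ 0) :
      ∃! e : m ↪ n, ∀ i, σ (.inl i) = .inr (e i) :=
    existsUnique_embedding_of_inr (σ.injective.comp Sum.inl_injective) (inl_to_inr σ hσ)
  refine ⟨fun e => ∑ σ with ∀ i, σ (.inl i) = .inr (e i), v σ,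
    fun e => Finset.sum_nonneg fun σ _ => hv σ, fun i j => ?_⟩
  calc H i j = ∑ σ with σ (.inl i) = .inr j, v σ := hsum (.inl i) (.inr j)
    _ = ∑ σ with σ (.inl i) = .inr j, ∑ e : m ↪ n with ∀ i, σ (.inl i) = .inr (e i), v σ := by
      refine Finset.sum_congr rfl fun σ _ => ?_
      by_cases hσ : v σ = 0
      · simp [hσ]
      · have hcard := Fintype.existsUnique_iff_card_one _ |>.mp (existsUnique_embedding σ hσ)
        rw [Finset.sum_const, hcard, one_smul]
    _ = ∑ e : m ↪ n with e i = j, ∑ σ with ∀ i, σ (.inl i) = .inr (e i), v σ :=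
      Finset.sum_comm' fun σ e => by
        simp only [Finset.mem_filter_univ]
        refine ⟨fun ⟨hσ, he⟩ => ⟨he, ?_⟩, fun ⟨he, hij⟩ => ⟨?_, he⟩⟩
        · exact Sum.inr_injective ((he i).symm.trans hσ)
        · rw [he, hij]

end Birkhoff

section Histogram

variable {V : Type} [Fintype V] {H : V → ℕ → ℚ} {q : ℚ}

theorem IsHistogram.exists_eq_sum_permMat (hH : IsHistogram H q) {S : Finset ℕ}
    (hS : colH H ⊆ S) :
    ∃ w : (V ↪ S) → ℚ, (∀ e, 0 ≤ w e) ∧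
      ∀ x α, H x α = ∑ e, w e * permMat (fun y => (e y : ℕ)) x α := by
  obtain ⟨hq, hnonneg, -, hrow, hcol⟩ := hH
  have hrowS (x) : ∑ α : S, H x α = q := by
    rw [← hrow x, Finset.sum_coe_sort S (H x)]
    exact (finsum_eq_sum_of_support_subset _ fun α hα => hS ⟨x, hα⟩).symm
  obtain ⟨w, hw, hsum⟩ := exists_eq_sum_embedding_of_sum_eq (H := fun x (α : S) => H x α) hq
    (fun x α => hnonneg x α) hrowS (fun α => hcol α)
  refine ⟨w, hw, fun x α => ?_⟩
  by_cases hα : α ∈ S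
  · simp [hsum x ⟨α, hα⟩, permMat, Finset.sum_filter, Subtype.ext_iff]
  · have hHα : H x α = 0 := by_contra fun h => hα (hS ⟨x, h⟩)
    have hne (e : V ↪ S) : (e x : ℕ) ≠ α := fun h => hα (h ▸ (e x).2)
    simp [hHα, permMat, hne]

end Histogram

section Fireability

variable {P T V : Type} {N : UDPN P T V}

theorem preSet_mono {ρ ρ' : List (Step T V)} (h : ρ ⊆ ρ') : preSet N ρ ⊆ preSet N ρ' :=
  fun _ ⟨s, hs, hx⟩ => ⟨s, h hs, hx⟩

theorem postSet_mono {ρ ρ' : List (Step T V)} (h : ρ ⊆ ρ') : postSet N ρ ⊆ postSet N ρ' :=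
  fun _ ⟨s, hs, hx⟩ => ⟨s, h hs, hx⟩

variable [Fintype V]

theorem compInv_nonneg {A : P → V → ℚ} {p : P} (hA : ∀ x, 0 ≤ A p x) (π : V → ℕ) (α : ℕ) :
    0 ≤ compInv A π p α :=
  Finset.sum_nonneg fun x _ => ite_nonneg (hA x) le_rfl

theorem compInv_eq_zero {A : P → V → ℚ} {π : V → ℕ} {p : P} {α : ℕ}
    (h : ∀ x, π x = α → A p x = 0) : compInv A π p α = 0 :=
  Finset.sum_eq_zero fun x _ => ite_eq_right_iff.mpr (h x)

theorem compInv_eq_sum_mul_permMat (A : P → V → ℚ) (π : V → ℕ) (p : P) (α : ℕ) :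
    compInv A π p α = ∑ x, A p x * permMat π x α := by
  simp [compInv, permMat]

theorem FinCols.add_mul_compInv {m : P → ℕ → ℚ} (hm : FinCols m) (c : ℚ) (A : P → V → ℚ)
    (π : V → ℕ) : FinCols fun p α => m p α + c * compInv A π p α := by
  refine (hm.union (Set.finite_range π)).subset fun α ⟨p, hp⟩ => ?_
  by_contra! hα
  have hmα : m p α = 0 := by_contra fun h => hα (.inl ⟨p, h⟩)
  have hAα : compInv A π p α = 0 := compInv_eq_zero fun x hx => absurd (.inr ⟨x, hx⟩) hα
  exact hp (by simp [hmα, hAα])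

/-- The matrix `F(t,•)`, the counterpart of `preMat`. -/
def postMat (N : UDPN P T V) (t : T) (p : P) (x : V) : ℚ := (N.post t p x : ℚ)

theorem stepEffect_eq_sub (N : UDPN P T V) (s : Step T V) (p : P) (α : ℕ) :
    stepEffect N s p α =
      s.c * compInv (postMat N s.t) s.π p α - s.c * compInv (preMat N s.t) s.π p α := by
  simp only [stepEffect, compInv_eq_sum_mul_permMat, delta, postMat, preMat, sub_mul,
    Finset.sum_sub_distrib, mul_sub]

theorem mul_compInv_preMat_nonneg {s : Step T V} (hs : IsStep s) (p : P) (α : ℕ) :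
    0 ≤ s.c * compInv (preMat N s.t) s.π p α :=
  mul_nonneg hs.1 (compInv_nonneg (A := preMat N s.t) (fun _ => Nat.cast_nonneg _) _ _)

theorem mul_compInv_postMat_nonneg {s : Step T V} (hs : IsStep s) (p : P) (α : ℕ) :
    0 ≤ s.c * compInv (postMat N s.t) s.π p α :=
  mul_nonneg hs.1 (compInv_nonneg (A := postMat N s.t) (fun _ => Nat.cast_nonneg _) _ _)

theorem compInv_preMat_eq_zero {ρ : List (Step T V)} {p : P} {α : ℕ} (h : (p, α) ∉ preSet N ρ)
    {s : Step T V} (hs : s ∈ ρ) : compInv (preMat N s.t) s.π p α = 0 :=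
  compInv_eq_zero fun x hx => Nat.cast_eq_zero.mpr <|
    Nat.eq_zero_of_not_pos fun hpos => h ⟨s, hs, x, hpos, hx⟩

theorem compInv_postMat_eq_zero {ρ : List (Step T V)} {p : P} {α : ℕ} (h : (p, α) ∉ postSet N ρ)
    {s : Step T V} (hs : s ∈ ρ) : compInv (postMat N s.t) s.π p α = 0 :=
  compInv_eq_zero fun x hx => Nat.cast_eq_zero.mpr <|
    Nat.eq_zero_of_not_pos fun hpos => h ⟨s, hs, x, hpos, hx⟩

theorem runEffect_cons (N : UDPN P T V) (s : Step T V) (ρ : List (Step T V)) (p : P) (α : ℕ) :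
    runEffect N (s :: ρ) p α = stepEffect N s p α + runEffect N ρ p α := by
  simp [runEffect]

theorem runEffect_nonpos {ρ : List (Step T V)} (hρ : IsRun ρ) {p : P} {α : ℕ}
    (h : (p, α) ∉ postSet N ρ) : runEffect N ρ p α ≤ 0 := by
  refine (List.sum_le_card_nsmul _ 0 fun e he => ?_).trans_eq (nsmul_zero _)
  obtain ⟨s, hs, rfl⟩ := List.mem_map.mp he
  rw [stepEffect_eq_sub, compInv_postMat_eq_zero h hs, mul_zero, zero_sub]
  exact neg_nonpos.mpr (mul_compInv_preMat_nonneg (hρ s hs) p α)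

theorem mul_compInv_preMat_le_of_disjoint {s : Step T V} {ρ : List (Step T V)} {m : P → ℕ → ℚ}
    (hρ : IsRun ρ) (hdisj : Disjoint (preSet N (s :: ρ)) (postSet N (s :: ρ))) {p : P} {α : ℕ}
    (hm : 0 ≤ m p α) (hend : 0 ≤ m p α + runEffect N (s :: ρ) p α) :
    s.c * compInv (preMat N s.t) s.π p α ≤ m p α := by
  by_cases hpre : (p, α) ∈ preSet N (s :: ρ)
  · have hpost := Set.disjoint_left.mp hdisj hpre
    have hrest := runEffect_nonpos hρ (hpost <| postSet_mono (List.subset_cons_self s ρ) ·)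
    rw [runEffect_cons, stepEffect_eq_sub,
      compInv_postMat_eq_zero hpost List.mem_cons_self] at hend
    linarith
  · rwa [compInv_preMat_eq_zero hpre List.mem_cons_self, mul_zero]

theorem runFireable_of_disjoint_preSet_postSet {ρ : List (Step T V)} {m : P → ℕ → ℚ}
    (hρ : IsRun ρ) (hdisj : Disjoint (preSet N ρ) (postSet N ρ)) (hm : IsMarking true m)
    (hend : ∀ p α, 0 ≤ m p α + runEffect N ρ p α) : runFireable true N m ρ := by
  induction ρ generalizing m with
  | nil => trivial
  | cons s ρ ih =>
    obtain ⟨hs, hρ⟩ := List.forall_mem_cons.mp hρ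
    have hpre (p α) : 0 ≤ m p α - s.c * compInv (preMat N s.t) s.π p α :=
      sub_nonneg.mpr (mul_compInv_preMat_le_of_disjoint hρ hdisj (hm.2 rfl p α) (hend p α))
    have hnext (p α) : 0 ≤ m p α + stepEffect N s p α := by
      have := mul_compInv_postMat_nonneg (N := N) hs p α
      rw [stepEffect_eq_sub]
      linarith [hpre p α]
    refine ⟨⟨?_, fun _ => hpre⟩, ih hρ ?_ ⟨hm.1.add_mul_compInv s.c _ s.π, fun _ => hnext⟩ ?_⟩
    · simpa [sub_eq_add_neg] using hm.1.add_mul_compInv (-s.c) (preMat N s.t) s.π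
    · exact hdisj.mono (preSet_mono (List.subset_cons_self s ρ))
        (postSet_mono (List.subset_cons_self s ρ))
    · simpa only [runEffect_cons, add_assoc] using hend

end Fireability

section SingleTransition

variable {P T V : Type} {ι : Type*} [Fintype ι] {N : UDPN P T V} {t : T}

/-- `PrePlace(t) ∩ PostPlace(t) = ∅` for the single transition `t`; a net satisfies `IsLoopless`
when this holds for all its transitions. -/
def IsLooplessTransition (N : UDPN P T V) (t : T) : Prop :=
  ¬ ∃ p, (∃ x, 0 < N.pre p t x) ∧ (∃ x, 0 < N.post t p x)

theorem IsLooplessTransition.disjoint_preSet_postSet (ht : IsLooplessTransition N t)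
    {ρ : List (Step T V)} (hρ : ∀ s ∈ ρ, s.t = t) : Disjoint (preSet N ρ) (postSet N ρ) := by
  rw [Set.disjoint_left]
  rintro ⟨p, α⟩ ⟨s, hs, x, hpre, -⟩ ⟨s', hs', x', hpost, -⟩
  rw [hρ s hs] at hpre
  rw [hρ s' hs'] at hpost
  exact ht ⟨p, ⟨x, hpre⟩, ⟨x', hpost⟩⟩

/-- The run firing the transition `t` once in each mode `π j`, with coefficient `w j`; the order in
which the modes are taken is arbitrary. -/
def singleTransitionRun (t : T) (w : ι → ℚ) (π : ι → V → ℕ) : List (Step T V) :=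
  (Finset.univ : Finset ι).toList.map fun j => ⟨w j, t, π j⟩

theorem mem_singleTransitionRun {w : ι → ℚ} {π : ι → V → ℕ} {s : Step T V} :
    s ∈ singleTransitionRun t w π ↔ ∃ j, ⟨w j, t, π j⟩ = s := by
  simp [singleTransitionRun]

theorem isRun_singleTransitionRun {w : ι → ℚ} {π : ι → V → ℕ} (hw : ∀ j, 0 ≤ w j)
    (hπ : ∀ j, Function.Injective (π j)) : IsRun (singleTransitionRun t w π) := by
  intro s hs
  obtain ⟨j, rfl⟩ := mem_singleTransitionRun.mp hs
  exact ⟨hw j, hπ j⟩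

theorem runEffect_singleTransitionRun [Fintype V] (N : UDPN P T V) (t : T) (w : ι → ℚ)
    (π : ι → V → ℕ) (p : P) (α : ℕ) :
    runEffect N (singleTransitionRun t w π) p α =
      ∑ x, delta N t p x * ∑ j, w j * permMat (π j) x α := by
  simp only [runEffect, singleTransitionRun, List.map_map, Finset.sum_map_toList,
    Function.comp_apply, stepEffect, compInv_eq_sum_mul_permMat, Finset.mul_sum]
  rw [Finset.sum_comm]
  simp only [mul_left_comm]

theorem loopless_histogram_fireable_general [Fintype V] (ht : IsLooplessTransition N t)
    {i f : P → ℕ → ℚ} (hi : IsMarking true i) (hf : IsMarking true f) {H : V → ℕ → ℚ} {q : ℚ}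
    (hH : IsHistogram H q) (heq : ∀ p α, f p α = i p α + ∑ x, delta N t p x * H x α) :
    Reach true N i f := by
  obtain ⟨w, hw, hsum⟩ := hH.exists_eq_sum_permMat hH.2.2.1.coe_toFinset.superset
  let ρ := singleTransitionRun t w fun e x => (e x : ℕ)
  have hρ : IsRun ρ :=
    isRun_singleTransitionRun hw fun e => Subtype.val_injective.comp e.injective
  have hdisj : Disjoint (preSet N ρ) (postSet N ρ) := ht.disjoint_preSet_postSet fun s hs => by
    obtain ⟨e, rfl⟩ := mem_singleTransitionRun.mp hs
    rfl
  have heffect (p α) : f p α = i p α + runEffect N ρ p α := by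
    simp only [heq, hsum, ρ, runEffect_singleTransitionRun]
  exact ⟨ρ, hρ, runFireable_of_disjoint_preSet_postSet hρ hdisj hi
    fun p α => heffect p α ▸ hf.2 rfl p α, funext₂ heffect⟩

end SingleTransition

/-- In a loop-less UDPN, if `f = i + Δ(t)·H` for a histogram
`H` and a transition `t`, then there is a ℚ⁺-run `ρ` with `i →ρ_{ℚ⁺} f`. -/
theorem loopless_histogram_fireable
    (N : UDPN P T V) (hN : IsLoopless N)
    (i f : P → ℕ → ℚ)
    (hi : IsMarking true i) (hf : IsMarking true f)
    (H : V → ℕ → ℚ) (q : ℚ) (hH : IsHistogram H q) (t : T)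
    (heq : ∀ p α, f p α = i p α + ∑ x : V, delta N t p x * H x α) :
    ∃ ρ : List (Step T V), IsRun ρ ∧ Reaches true N i ρ f :=
  loopless_histogram_fireable_general (hN t) hi hf hH heq
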